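/- arXiv:2504.14674 — 2 statements merged into one kernel-verified Lean document; each statement's English description precedes it below -/
import Mathlib

section
/- Let m ≥ 4 be even and let f₆(x) = x + x^{2^{m/2}} + x^{2^m − 2^{m/2} + 1}; let s_t = Tr(f₆(α^t + 1)). Then the linear span is L_s = m(2^{m/2+1} − 2)/3 if m ≡ 0 (mod 4), and L_s = m(2^{m/2+1} − 4)/3 if m ≡ 2 (mod 4); consequently the binary cyclic code C_s has length 2^m − 1 and 𝔽₂-dimension 2^m − 1 − L_s, and the minimum distance satisfies 2^{(m−2)/2} ≤ d(C_s) ≤ L_s + 1. -/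
open Polynomial
open scoped Classical

/-- The polynomial S(x) = ∑_{t=0}^{v−1} s_t x^t ∈ 𝔽₂[x], where
    s_t = Tr(f(α^t + 1)) and v = 2^m − 1. -/
noncomputable def traceSeqPoly (m : ℕ) (α : GaloisField 2 m)
    (f : GaloisField 2 m → GaloisField 2 m) : Polynomial (ZMod 2) :=
  ∑ t ∈ Finset.range (2 ^ m - 1),
    C (Algebra.trace (ZMod 2) (GaloisField 2 m) (f (α ^ t + 1))) * X ^ t

/-- The minimal polynomial of the sequence:
    g_s(x) = (x^v − 1)/gcd(x^v − 1, S(x)). Its degree is the linear span L_s. -/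
noncomputable def genPoly (m : ℕ) (α : GaloisField 2 m)
    (f : GaloisField 2 m → GaloisField 2 m) : Polynomial (ZMod 2) :=
  (X ^ (2 ^ m - 1) - 1) /
    EuclideanDomain.gcd (X ^ (2 ^ m - 1) - 1) (traceSeqPoly m α f)

/-- The binary cyclic code C_s = {c ∈ 𝔽₂[x] : deg c < v and g_s ∣ c},
    as an 𝔽₂-submodule of 𝔽₂[x]. -/
noncomputable def codeC (m : ℕ) (α : GaloisField 2 m)
    (f : GaloisField 2 m → GaloisField 2 m) :
    Submodule (ZMod 2) (Polynomial (ZMod 2)) :=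
  Polynomial.degreeLT (ZMod 2) (2 ^ m - 1) ⊓
    (Ideal.span {genPoly m α f}).restrictScalars (ZMod 2)

/-- The set of Hamming weights (numbers of nonzero coefficients) of the
    nonzero codewords of a code; the minimum distance is its least element. -/
def wtSet (Cs : Submodule (ZMod 2) (Polynomial (ZMod 2))) : Set ℕ :=
  {w | ∃ c : Polynomial (ZMod 2), c ∈ Cs ∧ c ≠ 0 ∧ c.support.card = w}


/-- Odd numbers below `2^n` whose bit length has the parity of `n`. -/
def bSet : ℕ → Finset ℕ
  | 0 => ∅
  | 1 => {1}
  | n + 2 => ((Finset.range (2 ^ n)).image (fun k => 2 ^ (n + 1) + 2 * k + 1)) ∪ bSet n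

theorem bSet_odd_lt (n : ℕ) : ∀ b ∈ bSet n, b % 2 = 1 ∧ b < 2 ^ n := by
  induction n using Nat.strong_induction_on with
  | _ n ih =>
    match n, ih with
    | 0, _ => simp [bSet]
    | 1, _ => simp [bSet]
    | n + 2, ih =>
      intro b hb
      simp only [bSet, Finset.mem_union, Finset.mem_image, Finset.mem_range] at hb
      have e1 : 2 ^ (n + 1) = 2 * 2 ^ n := by ring
      have e2 : 2 ^ (n + 2) = 4 * 2 ^ n := by ring
      rcases hb with ⟨k, hk, rfl⟩ | hb
      · rw [e1, e2]; omega
      · have := ih n (by omega) b hb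
        omega

theorem bSet_disj (n : ℕ) :
    Disjoint ((Finset.range (2 ^ n)).image (fun k => 2 ^ (n + 1) + 2 * k + 1)) (bSet n) := by
  rw [Finset.disjoint_left]
  intro b hb hb'
  have := (bSet_odd_lt n b hb').2
  simp only [Finset.mem_image, Finset.mem_range] at hb
  obtain ⟨k, hk, rfl⟩ := hb
  have e1 : 2 ^ (n + 1) = 2 * 2 ^ n := by ring
  omega

theorem bSet_inj (n : ℕ) : Function.Injective (fun k : ℕ => 2 ^ (n + 1) + 2 * k + 1) := by
  intro a b h
  simp only at h
  omega

theorem bSet_card (n : ℕ) :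
    3 * (bSet (2 * n)).card + 1 = 2 ^ (2 * n) ∧ 3 * (bSet (2 * n + 1)).card = 2 ^ (2 * n + 1) + 1 := by
  induction n with
  | zero => simp [bSet]
  | succ n ih =>
    have h1 : 2 * (n + 1) = 2 * n + 2 := by ring
    have h2 : 2 * (n + 1) + 1 = (2 * n + 1) + 2 := by ring
    rw [h2, h1]
    simp only [bSet]
    rw [Finset.card_union_of_disjoint (bSet_disj _), Finset.card_union_of_disjoint (bSet_disj _),
      Finset.card_image_of_injective _ (bSet_inj _), Finset.card_image_of_injective _ (bSet_inj _)]
    simp only [Finset.card_range]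
    have e2 : 2 ^ (2 * n + 2) = 4 * 2 ^ (2 * n) := by ring
    have e3 : 2 ^ (2 * n + 1 + 2) = 4 * 2 ^ (2 * n + 1) := by ring
    omega

theorem sum_range_two_mul {M : Type*} [AddCommMonoid M] (F : ℕ → M) (n : ℕ) :
    ∑ b ∈ Finset.range (2 * n), F b =
      ∑ b ∈ Finset.range n, F (2 * b) + ∑ b ∈ Finset.range n, F (2 * b + 1) := by
  induction n with
  | zero => simp
  | succ n ih =>
    rw [show 2 * (n + 1) = 2 * n + 1 + 1 by ring, Finset.sum_range_succ, Finset.sum_range_succ, ih,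
      Finset.sum_range_succ, Finset.sum_range_succ]
    abel

theorem bSet_sum {K : Type*} [Field K] [CharP K 2] (F : ℕ → K) (h0 : F 0 = 0)
    (h2 : ∀ b, F (2 * b) = F b) (n : ℕ) :
    ∑ b ∈ Finset.range (2 ^ n), F b = ∑ b ∈ bSet n, F b := by
  induction n using Nat.strong_induction_on with
  | _ n ih =>
    match n, ih with
    | 0, _ => simp [bSet, h0]
    | 1, _ => simp [bSet, Finset.sum_range_succ, h0]
    | n + 2, ih =>
      simp only [bSet]
      rw [Finset.sum_union (bSet_disj _), Finset.sum_image (fun a _ b _ h => bSet_inj n h),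
        ← ih n (by omega), show 2 ^ (n + 2) = 2 * (2 * 2 ^ n) by ring, sum_range_two_mul]
      simp only [h2]
      rw [sum_range_two_mul, show 2 * 2 ^ n = 2 ^ n + 2 ^ n by ring,
        Finset.sum_range_add (fun x => F (2 * x + 1))]
      simp only [h2]
      have : ∀ k, 2 * (2 ^ n + k) + 1 = 2 ^ (n + 1) + 2 * k + 1 := by intro k; ring
      simp only [this]
      have h := CharTwo.add_self_eq_zero (∑ b ∈ Finset.range (2 ^ n), F (2 * b + 1))
      linear_combination h

/-- The key injectivity, exponent form. -/
theorem key_inj_aux (h : ℕ) (hh : 2 ≤ h) (b c k : ℕ) (hb : b % 2 = 1) (hb' : b < 2 ^ (h + 1))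
    (hb2 : b ≠ 2 ^ h + 1) (hc : c % 2 = 1) (hc' : c < 2 ^ (h + 1))
    (hk : k < 2 * h) (hbc : b ≡ c * 2 ^ k [MOD 2 ^ (2 * h) - 1]) : k = 0 ∧ b = c := by
  have e1 : 2 ^ (h + 1) = 2 * 2 ^ h := by ring
  have e2 : 2 ^ (2 * h) = 2 ^ h * 2 ^ h := by rw [two_mul, pow_add]
  have e4 : 4 ≤ 2 ^ h := by
    calc 4 = 2 ^ 2 := by norm_num
      _ ≤ 2 ^ h := Nat.pow_le_pow_right (by norm_num) hh
  have hbig : 4 * 2 ^ h ≤ 2 ^ (2 * h) := by rw [e2]; exact Nat.mul_le_mul_right _ e4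
  have hbv : b < 2 ^ (2 * h) - 1 := by omega
  have hcv : c < 2 ^ (2 * h) - 1 := by omega
  have hone : 1 * 2 ^ (2 * h) ≡ 1 [MOD 2 ^ (2 * h) - 1] := by
    rw [one_mul]
    exact (Nat.modEq_iff_dvd' (by omega)).2 dvd_rfl |>.symm
  -- small shifts are impossible
  have small : ∀ b c k : ℕ, b % 2 = 1 → b < 2 ^ (2 * h) - 1 → c < 2 ^ (h + 1) → 1 ≤ k → k ≤ h - 1 →
      b ≡ c * 2 ^ k [MOD 2 ^ (2 * h) - 1] → False := by
    intro b c k hb hbv hc hk1 hk2 H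
    have h1 : c * 2 ^ k < 2 ^ (2 * h) := by
      calc c * 2 ^ k < 2 ^ (h + 1) * 2 ^ k := Nat.mul_lt_mul_of_pos_right hc (by positivity)
        _ ≤ 2 ^ (h + 1) * 2 ^ (h - 1) := Nat.mul_le_mul_left _ (Nat.pow_le_pow_right (by norm_num) hk2)
        _ = 2 ^ (2 * h) := by rw [← pow_add]; congr 1; omega
    obtain ⟨k', rfl⟩ : ∃ k', k = k' + 1 := ⟨k - 1, by omega⟩
    have h3 : c * 2 ^ (k' + 1) = 2 * (c * 2 ^ k') := by ring
    have h4 : 2 ^ (2 * h) = 2 * 2 ^ (2 * h - 1) := by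
      rw [← pow_succ']; congr 1; omega
    have := Nat.ModEq.eq_of_lt_of_lt H hbv (by omega)
    omega
  rcases Nat.eq_zero_or_pos k with rfl | hk0
  · refine ⟨rfl, ?_⟩
    rw [pow_zero, mul_one] at hbc
    exact Nat.ModEq.eq_of_lt_of_lt hbc hbv hcv
  exfalso
  rcases lt_trichotomy k h with hlt | rfl | hgt
  · exact small b c k hb hbv hc' hk0 (by omega) hbc
  · have hu : c = 2 ^ k * (c / 2 ^ k) + c % 2 ^ k := (Nat.div_add_mod _ _).symm
    have hu1 : c / 2 ^ k ≤ 1 := by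
      have : c / 2 ^ k < 2 := by rw [Nat.div_lt_iff_lt_mul (by positivity)]; omega
      omega
    have hw1 : c % 2 ^ k < 2 ^ k := Nat.mod_lt _ (by positivity)
    generalize c / 2 ^ k = u at *
    generalize c % 2 ^ k = w at *
    have h1 : c * 2 ^ k ≡ u + w * 2 ^ k [MOD 2 ^ (2 * k) - 1] := by
      have : c * 2 ^ k = u * (1 * 2 ^ (2 * k)) + w * 2 ^ k := by rw [hu, e2]; ring
      rw [this]
      simpa using (hone.mul_left u).add_right (w * 2 ^ k)
    have h5 : w * 2 ^ k + 2 ^ k ≤ 2 ^ (2 * k) := by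
      rw [e2, ← Nat.succ_mul]; exact Nat.mul_le_mul_right _ hw1
    have h2 := Nat.ModEq.eq_of_lt_of_lt (hbc.trans h1) hbv (by omega)
    have hpe : 2 ^ k = 2 * 2 ^ (k - 1) := by rw [← pow_succ']; congr 1; omega
    have h6 : w * 2 ^ k = 2 * (w * 2 ^ (k - 1)) := by rw [hpe]; ring
    have hu2 : u = 1 := by omega
    have hw2 : w < 2 := by
      by_contra hcon
      have : 2 * 2 ^ k ≤ w * 2 ^ k := Nat.mul_le_mul_right _ (by omega)
      omega
    interval_cases w
    · subst hu2; omega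
    · omega
  · have H := (hbc.mul_right (2 ^ (2 * h - k)))
    rw [mul_assoc, ← pow_add, show k + (2 * h - k) = 2 * h by omega] at H
    have H2 : c * (1 * 2 ^ (2 * h)) ≡ c * 1 [MOD 2 ^ (2 * h) - 1] := hone.mul_left c
    rw [one_mul, mul_one] at H2
    exact small c b (2 * h - k) hc hcv hb' (by omega) (by omega) (H.trans H2).symm

theorem key_inj (h : ℕ) (hh : 2 ≤ h) (b c i j : ℕ) (hb : b % 2 = 1) (hb' : b < 2 ^ (h + 1))
    (hb2 : b ≠ 2 ^ h + 1) (hc : c % 2 = 1) (hc' : c < 2 ^ (h + 1)) (hc2 : c ≠ 2 ^ h + 1)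
    (hi : i < 2 * h) (hj : j < 2 * h)
    (hbc : b * 2 ^ i ≡ c * 2 ^ j [MOD 2 ^ (2 * h) - 1]) : i = j ∧ b = c := by
  have hcop : ∀ i, Nat.gcd (2 ^ (2 * h) - 1) (2 ^ i) = 1 := by
    intro i
    apply Nat.Coprime.pow_right
    have : 2 ^ (2 * h) = 2 * 2 ^ (2 * h - 1) := by rw [← pow_succ']; congr 1; omega
    have h3 : 0 < 2 ^ (2 * h - 1) := by positivity
    rw [Nat.coprime_two_right, Nat.odd_iff]
    omega
  rcases le_total i j with hij | hij
  · have : b ≡ c * 2 ^ (j - i) [MOD 2 ^ (2 * h) - 1] := by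
      apply Nat.ModEq.cancel_right_of_coprime (hcop i)
      rw [mul_assoc, ← pow_add, Nat.sub_add_cancel hij]
      exact hbc
    have := key_inj_aux h hh b c (j - i) hb hb' hb2 hc hc' (by omega) this
    omega
  · have : c ≡ b * 2 ^ (i - j) [MOD 2 ^ (2 * h) - 1] := by
      apply Nat.ModEq.cancel_right_of_coprime (hcop j)
      rw [mul_assoc, ← pow_add, Nat.sub_add_cancel hij]
      exact hbc.symm
    have := key_inj_aux h hh c b (i - j) hc hc' hc2 hb hb' (by omega) this
    omega

section field
variable {K : Type*} [Field K] [CharP K 2]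

/-- Explicit trace polynomial. -/
def trS (m : ℕ) (x : K) : K := ∑ i ∈ Finset.range m, x ^ (2 ^ i)

theorem trS_add (m : ℕ) (x y : K) : trS m (x + y) = trS m x + trS m y := by
  unfold trS
  rw [← Finset.sum_add_distrib]
  exact Finset.sum_congr rfl fun i _ => add_pow_char_pow x y 2 i

theorem trS_sum (m : ℕ) {ι : Type*} (s : Finset ι) (g : ι → K) :
    trS m (∑ i ∈ s, g i) = ∑ i ∈ s, trS m (g i) := by
  unfold trS
  rw [Finset.sum_comm]
  exact Finset.sum_congr rfl fun i _ => sum_pow_char_pow 2 i s g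

theorem trS_sq (m : ℕ) (hK : ∀ x : K, x ^ (2 ^ m) = x) (x : K) : trS m (x ^ 2) = trS m x := by
  unfold trS
  have h1 := Finset.sum_range_succ (fun i => x ^ (2 ^ i)) m
  rw [Finset.sum_range_succ'] at h1
  rw [hK, pow_zero, pow_one] at h1
  have h2 := add_right_cancel h1
  rw [← h2]
  refine Finset.sum_congr rfl fun i _ => ?_
  rw [← pow_mul, pow_succ']

theorem trS_pow (m : ℕ) (hK : ∀ x : K, x ^ (2 ^ m) = x) (x : K) (k : ℕ) :
    trS m (x ^ (2 ^ k)) = trS m x := by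
  induction k with
  | zero => simp
  | succ k ih => rw [pow_succ, pow_mul, trS_sq m hK, ih]

theorem geom_two (h : ℕ) (hh : 1 ≤ h) (y : K) :
    (y + 1) ^ (2 ^ h - 1) = ∑ b ∈ Finset.range (2 ^ h), y ^ b := by
  have hp : 1 < 2 ^ h := Nat.one_lt_two_pow (by omega)
  have e : y + 1 = y - 1 := by rw [CharTwo.sub_eq_add]
  by_cases hy : y + 1 = 0
  · have : y = 1 := by rw [e, sub_eq_zero] at hy; exact hy
    rw [hy, zero_pow (by omega), this]
    simp [CharTwo.two_eq_zero, show h ≠ 0 by omega]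
  · apply mul_right_cancel₀ hy
    rw [← pow_succ, Nat.sub_add_cancel hp.le, e, geom_sum_mul, ← e, add_pow_char_pow, one_pow,
      CharTwo.sub_eq_add]

theorem trS_f (h : ℕ) (hh : 2 ≤ h) (hK : ∀ x : K, x ^ (2 ^ (2 * h)) = x) (y : K) :
    trS (2 * h) ((y + 1) + (y + 1) ^ (2 ^ h) + (y + 1) ^ (2 ^ (2 * h) - 2 ^ h + 1)) =
      ∑ b ∈ (bSet (h + 1)).erase (2 ^ h + 1), trS (2 * h) (y ^ b) := by
  have e1 : (y + 1) ^ (2 ^ (2 * h) - 2 ^ h + 1) =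
      ∑ b ∈ Finset.range (2 ^ h), (y ^ (b * 2 ^ h + 1) + y ^ (b * 2 ^ h)) := by
    have : 2 ^ (2 * h) - 2 ^ h = (2 ^ h - 1) * 2 ^ h := by
      rw [two_mul, pow_add, Nat.sub_mul, one_mul]
    rw [this, pow_succ, pow_mul, geom_two h (by omega), sum_pow_char_pow, Finset.sum_mul]
    refine Finset.sum_congr rfl fun b _ => ?_
    ring
  rw [trS_add, trS_add, trS_pow _ hK, CharTwo.add_self_eq_zero, zero_add, e1, trS_sum]
  have e2 : ∀ b, trS (2 * h) (y ^ (b * 2 ^ h + 1) + y ^ (b * 2 ^ h)) =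
      trS (2 * h) (y ^ (2 ^ h + b)) + trS (2 * h) (y ^ b) := by
    intro b
    rw [trS_add, pow_mul y b, trS_pow _ hK, ← trS_pow _ hK (y ^ (b * 2 ^ h + 1)) h]
    congr 2
    rw [← pow_mul, add_mul, mul_assoc, ← pow_add, ← two_mul, one_mul, pow_add, mul_comm b, pow_mul,
      hK, pow_add, mul_comm]
  simp only [e2]
  rw [Finset.sum_add_distrib, add_comm, ← Finset.sum_range_add (fun b => trS (2 * h) (y ^ b)),
    show 2 ^ h + 2 ^ h = 2 ^ (h + 1) by ring, bSet_sum]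
  · symm
    apply Finset.sum_erase
    have : trS (2 * h) (y ^ (2 ^ h + 1)) = 0 := by
      unfold trS
      rw [two_mul, Finset.sum_range_add]
      have : ∀ i, (y ^ (2 ^ h + 1)) ^ 2 ^ (h + i) = (y ^ (2 ^ h + 1)) ^ 2 ^ i := by
        intro i
        rw [pow_add 2 h i, pow_mul]
        congr 1
        rw [← pow_mul, add_mul, ← pow_add, ← two_mul, one_mul, pow_add, hK, pow_succ, mul_comm]
      simp only [this]
      exact CharTwo.add_self_eq_zero _
    exact this
  · unfold trS
    simp [CharTwo.two_eq_zero]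
  · intro b
    rw [mul_comm 2 b, pow_mul, trS_sq _ hK]

theorem geom_root (v : ℕ) (hv : (v : K) = 1) (z : K) (hz : z ^ v = 1) :
    ∑ t ∈ Finset.range v, z ^ t = if z = 1 then 1 else 0 := by
  split_ifs with h
  · simp [h, hv]
  · have := geom_sum_mul z v
    rw [hz, sub_self] at this
    exact (mul_eq_zero.1 this).resolve_right (sub_ne_zero.2 h)

end field

section poly
variable {K : Type*} [Field K] [Algebra (ZMod 2) K]

theorem quot_roots (P S : Polynomial (ZMod 2)) (hP : P.Separable)
    (hs : (P.map (algebraMap (ZMod 2) K)).Splits) (R : Finset K)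
    (hR : ∀ x : K, x ∈ R ↔ aeval x P = 0 ∧ aeval x S ≠ 0) :
    (P / EuclideanDomain.gcd P S) ∣ P ∧
    (∀ x : K, x ∈ R ↔ aeval x (P / EuclideanDomain.gcd P S) = 0) ∧
    (P / EuclideanDomain.gcd P S).natDegree = R.card := by
  have hP0 : P ≠ 0 := hP.ne_zero
  have hdl := EuclideanDomain.gcd_dvd_left P S
  have hdr := EuclideanDomain.gcd_dvd_right P S
  have hab := EuclideanDomain.gcd_eq_gcd_ab P S
  generalize EuclideanDomain.gcdA P S = a at hab
  generalize EuclideanDomain.gcdB P S = b at hab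
  generalize EuclideanDomain.gcd P S = D at *
  have hD0 : D ≠ 0 := by
    rintro rfl
    exact hP0 (zero_dvd_iff.1 hdl)
  have hmul : D * (P / D) = P := EuclideanDomain.mul_div_cancel' hD0 hdl
  generalize P / D = G at *
  have hG : G ∣ P := ⟨D, by rw [mul_comm, hmul]⟩
  have hroot : ∀ x : K, x ∈ R ↔ aeval x G = 0 := by
    intro x
    rw [hR]
    constructor
    · rintro ⟨h1, h2⟩
      rw [← hmul, map_mul, mul_eq_zero] at h1
      refine h1.resolve_left fun h3 => h2 ?_
      obtain ⟨c, rfl⟩ := hdr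
      rw [map_mul, h3, zero_mul]
    · intro h1
      have hPx : aeval x P = 0 := by rw [← hmul, map_mul, h1, mul_zero]
      refine ⟨hPx, fun h2 => ?_⟩
      have hDx : aeval x D = 0 := by
        rw [hab, map_add, map_mul, map_mul, hPx, h2]; simp
      have hc : IsCoprime D G := by
        rw [← hmul] at hP
        exact hP.isCoprime
      obtain ⟨u, w, huw⟩ := hc
      have := congrArg (aeval x) huw
      rw [map_add, map_mul, map_mul, hDx, h1] at this
      simp at this
  refine ⟨hG, hroot, ?_⟩
  have hG0 : G ≠ 0 := ne_zero_of_dvd_ne_zero hP0 hG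
  have hGs : G.Separable := hP.of_dvd hG
  have hsp : (G.map (algebraMap (ZMod 2) K)).Splits :=
    hs.of_dvd (Polynomial.map_ne_zero hP0) (Polynomial.map_dvd _ hG)
  have hnd := card_rootSet_eq_natDegree hGs hsp
  rw [← hnd, ← Nat.card_eq_fintype_card, ← Nat.card_eq_finsetCard]
  have : (R : Set K) = G.rootSet K := by
    ext x
    rw [Finset.mem_coe, hroot, mem_rootSet]
    simp [hG0]
  rw [← this]
  rfl

/-- BCH-type bound. -/
theorem bch (v N : ℕ) (β γ : K) (hβ : β ≠ 0) (hγ : orderOf γ = v) (c : Polynomial (ZMod 2)) (hc0 : c ≠ 0)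
    (hdeg : c.degree < v) (hz : ∀ k < N, aeval (β * γ ^ k) c = 0) : N < c.support.card := by
  by_contra hcon
  push Not at hcon
  let e := c.support.equivFin.symm
  have key := Matrix.eq_zero_of_forall_pow_sum_mul_pow_eq_zero (R := K) (n := c.support.card)
    (v := fun i => algebraMap (ZMod 2) K (c.coeff (e i)) * β ^ (e i : ℕ))
    (f := fun i => γ ^ (e i : ℕ)) ?_ ?_
  · have hpos : 0 < c.support.card := by
      rw [Finset.card_pos]
      exact Polynomial.nonempty_support_iff.2 hc0
    have h1 := congrFun key ⟨0, hpos⟩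
    simp only [Pi.zero_apply, mul_eq_zero, map_eq_zero] at h1
    rcases h1 with h1 | h1
    · exact (mem_support_iff.1 (e ⟨0, hpos⟩).2) h1
    · exact pow_ne_zero _ hβ h1
  · intro i j hij
    simp only at hij
    have hlt : ∀ i, (e i : ℕ) < v := by
      intro i
      have := le_degree_of_mem_supp _ (e i).2
      exact_mod_cast lt_of_le_of_lt this hdeg
    have := pow_injOn_Iio_orderOf (by rw [hγ]; exact hlt i) (by rw [hγ]; exact hlt j) hij
    exact e.injective (Subtype.ext this)
  · intro k
    have h1 := hz k (lt_of_lt_of_le k.2 hcon)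
    rw [aeval_def, eval₂_eq_sum, Polynomial.sum_def, ← Finset.sum_coe_sort, ← e.sum_comp] at h1
    rw [← h1]
    refine Finset.sum_congr rfl fun j _ => ?_
    rw [mul_pow, ← pow_mul, ← pow_mul, mul_comm (k : ℕ), mul_assoc]

/-- Dimension of the cyclic code. -/
theorem code_dim (v : ℕ) (G : Polynomial (ZMod 2)) (hG : G ≠ 0) (hdeg : G.natDegree ≤ v) :
    Module.finrank (ZMod 2) ↥(Polynomial.degreeLT (ZMod 2) v ⊓
      (Ideal.span {G}).restrictScalars (ZMod 2)) = v - G.natDegree := by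
  have : Polynomial.degreeLT (ZMod 2) v ⊓ (Ideal.span {G}).restrictScalars (ZMod 2) =
      (Polynomial.degreeLT (ZMod 2) (v - G.natDegree)).map (LinearMap.mulLeft (ZMod 2) G) := by
    ext c
    simp only [Submodule.mem_inf, Submodule.restrictScalars_mem, Ideal.mem_span_singleton,
      mem_degreeLT, Submodule.mem_map, LinearMap.mulLeft_apply]
    constructor
    · rintro ⟨h1, d, rfl⟩
      refine ⟨d, ?_, rfl⟩
      by_cases hd : d = 0
      · subst hd; simp [bot_lt_iff_ne_bot]
      rw [degree_eq_natDegree (mul_ne_zero hG hd), natDegree_mul hG hd] at h1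
      rw [degree_eq_natDegree hd]
      have : G.natDegree + d.natDegree < v := by exact_mod_cast h1
      exact_mod_cast (by omega : d.natDegree < v - G.natDegree)
    · rintro ⟨d, hd, rfl⟩
      refine ⟨?_, dvd_mul_right _ _⟩
      by_cases hd0 : d = 0
      · subst hd0; simp [bot_lt_iff_ne_bot]
      rw [degree_eq_natDegree (mul_ne_zero hG hd0), natDegree_mul hG hd0]
      rw [degree_eq_natDegree hd0] at hd
      have : d.natDegree < v - G.natDegree := by exact_mod_cast hd
      exact_mod_cast (by omega : G.natDegree + d.natDegree < v)
  have hinj : Function.Injective (LinearMap.mulLeft (ZMod 2) G) := mul_right_injective₀ hG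
  rw [this, ← (Submodule.equivMapOfInjective _ hinj _).finrank_eq,
    (degreeLTEquiv (ZMod 2) _).finrank_eq]
  simp

end poly

/-- The root set of the generator polynomial. -/
noncomputable def rootR {K : Type*} [Field K] (h : ℕ) (α : K) : Finset K :=
  ((bSet (h + 1)).erase (2 ^ h + 1) ×ˢ Finset.range (2 * h)).image
    (fun p => (α ^ (p.1 * 2 ^ p.2))⁻¹)

theorem root_injOn {K : Type*} [Field K] (h : ℕ) (hh : 2 ≤ h) (α : K)
    (hα : orderOf α = 2 ^ (2 * h) - 1) :
    Set.InjOn (fun p : ℕ × ℕ => (α ^ (p.1 * 2 ^ p.2))⁻¹)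
      ((bSet (h + 1)).erase (2 ^ h + 1) ×ˢ Finset.range (2 * h) : Finset (ℕ × ℕ)) := by
  rintro ⟨b, i⟩ h1 ⟨c, j⟩ h2 heq
  simp only [Finset.coe_product, Set.mem_prod, Finset.mem_coe, Finset.mem_erase,
    Finset.mem_range] at h1 h2
  simp only [inv_inj] at heq
  have hα0 : α ≠ 0 := by
    rintro rfl
    rw [orderOf_zero] at hα
    have : 2 ^ 2 ≤ 2 ^ (2 * h) := Nat.pow_le_pow_right (by norm_num) (by omega)
    omega
  have hm : b * 2 ^ i ≡ c * 2 ^ j [MOD orderOf α] := by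
    have hu : (Units.mk0 α hα0) ^ (b * 2 ^ i) = (Units.mk0 α hα0) ^ (c * 2 ^ j) := by
      ext; simpa using heq
    have := pow_eq_pow_iff_modEq.1 hu
    rwa [← orderOf_units, Units.val_mk0] at this
  rw [hα] at hm
  have hb := bSet_odd_lt _ b h1.1.2
  have hc := bSet_odd_lt _ c h2.1.2
  have := key_inj h hh b c i j hb.1 hb.2 h1.1.1 hc.1 hc.2 h2.1.1 h1.2 h2.2 hm
  rw [this.1, this.2]

theorem mem_bSet_top (h k : ℕ) (hh : 1 ≤ h) (hk : k < 2 ^ (h - 1)) :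
    2 ^ h + 2 * k + 1 ∈ bSet (h + 1) := by
  obtain ⟨n, rfl⟩ : ∃ n, h = n + 1 := ⟨h - 1, by omega⟩
  simp only [bSet, Finset.mem_union, Finset.mem_image, Finset.mem_range]
  exact Or.inl ⟨k, by simpa using hk, rfl⟩

theorem aeval_seq (h : ℕ) (hh : 2 ≤ h)
    (α : GaloisField 2 (2 * h)) (hα : orderOf α = 2 ^ (2 * h) - 1)
    (f : GaloisField 2 (2 * h) → GaloisField 2 (2 * h))
    (hf : ∀ x, f x = x + x ^ (2 ^ h) + x ^ (2 ^ (2 * h) - 2 ^ h + 1))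
    (x : GaloisField 2 (2 * h)) (hx : x ^ (2 ^ (2 * h) - 1) = 1) :
    aeval x (traceSeqPoly (2 * h) α f) =
      ∑ p ∈ (bSet (h + 1)).erase (2 ^ h + 1) ×ˢ Finset.range (2 * h),
        if α ^ (p.1 * 2 ^ p.2) * x = 1 then 1 else 0 := by
  have hcard : Nat.card (GaloisField 2 (2 * h)) = 2 ^ (2 * h) := GaloisField.card 2 _ (by omega)
  have hK : ∀ x : GaloisField 2 (2 * h), x ^ (2 ^ (2 * h)) = x := by
    intro x
    have : Fintype (GaloisField 2 (2 * h)) := Fintype.ofFinite _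
    rw [← hcard, Nat.card_eq_fintype_card, FiniteField.pow_card]
  have htr : ∀ x : GaloisField 2 (2 * h),
      algebraMap (ZMod 2) (GaloisField 2 (2 * h))
        (Algebra.trace (ZMod 2) (GaloisField 2 (2 * h)) x) = trS (2 * h) x := by
    intro x
    rw [FiniteField.algebraMap_trace_eq_sum_pow, GaloisField.finrank 2 (by omega)]
    simp [trS]
  have hv1 : ((2 ^ (2 * h) - 1 : ℕ) : GaloisField 2 (2 * h)) = 1 := by
    rw [Nat.cast_sub Nat.one_le_two_pow]
    simp [CharTwo.two_eq_zero, show h ≠ 0 by omega, CharTwo.neg_eq]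
  unfold traceSeqPoly
  rw [map_sum]
  simp only [map_mul, aeval_C, map_pow, aeval_X, htr, hf]
  simp only [trS_f h hh hK]
  simp only [trS, Finset.sum_mul]
  rw [Finset.sum_comm, Finset.sum_product]
  refine Finset.sum_congr rfl fun b _ => ?_
  rw [Finset.sum_comm]
  refine Finset.sum_congr rfl fun i _ => ?_
  rw [← geom_root _ hv1]
  · refine Finset.sum_congr rfl fun t _ => ?_
    rw [mul_pow, ← pow_mul, ← pow_mul, ← pow_mul]
    congr 2
    ring
  · rw [mul_pow, hx, mul_one, ← pow_mul, mul_comm (_ * _) (_ - 1), pow_mul, ← hα, pow_orderOf_eq_one, one_pow]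

theorem gen_facts (h : ℕ) (hh : 2 ≤ h)
    (α : GaloisField 2 (2 * h)) (hα : orderOf α = 2 ^ (2 * h) - 1)
    (f : GaloisField 2 (2 * h) → GaloisField 2 (2 * h))
    (hf : ∀ x, f x = x + x ^ (2 ^ h) + x ^ (2 ^ (2 * h) - 2 ^ h + 1)) :
    genPoly (2 * h) α f ∣ X ^ (2 ^ (2 * h) - 1) - 1 ∧
    (∀ x, x ∈ rootR h α ↔ aeval x (genPoly (2 * h) α f) = 0) ∧
    (genPoly (2 * h) α f).natDegree = (rootR h α).card := by
  have hv : 2 ^ 2 ≤ 2 ^ (2 * h) := Nat.pow_le_pow_right (by norm_num) (by omega)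
  have hα0 : α ≠ 0 := by
    rintro rfl
    rw [orderOf_zero] at hα
    omega
  have hcard : Nat.card (GaloisField 2 (2 * h)) = 2 ^ (2 * h) := GaloisField.card 2 _ (by omega)
  apply quot_roots
  · rw [X_pow_sub_one_separable_iff, Nat.cast_sub Nat.one_le_two_pow]
    simp [show h ≠ 0 by omega, show (2 : ZMod 2) = 0 from rfl]
  · have hprim : IsPrimitiveRoot α (2 ^ (2 * h) - 1) := hα ▸ IsPrimitiveRoot.orderOf α
    simpa using X_pow_sub_one_splits hprim
  · intro x
    have hαv : α ^ (2 ^ (2 * h) - 1) = 1 := by rw [← hα, pow_orderOf_eq_one]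
    constructor
    · intro hx
      unfold rootR at hx
      obtain ⟨p, hp, rfl⟩ := Finset.mem_image.1 hx
      have hxv : ((α ^ (p.1 * 2 ^ p.2))⁻¹) ^ (2 ^ (2 * h) - 1) = 1 := by
        rw [inv_pow, ← pow_mul, mul_comm (p.1 * 2 ^ p.2), pow_mul, hαv, one_pow, inv_one]
      refine ⟨by simp [hxv], ?_⟩
      rw [aeval_seq h hh α hα f hf _ hxv, Finset.sum_eq_single p]
      · rw [if_pos (mul_inv_cancel₀ (pow_ne_zero _ hα0))]
        exact one_ne_zero
      · intro q hq hqp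
        rw [if_neg]
        intro hone
        apply hqp
        apply root_injOn h hh α hα hq hp
        simp only
        rw [mul_inv_eq_one₀ (pow_ne_zero _ hα0)] at hone
        rw [hone]
      · intro hp'
        exact absurd hp hp'
    · rintro ⟨h1, h2⟩
      have hxv : x ^ (2 ^ (2 * h) - 1) = 1 := by
        simpa [sub_eq_zero] using h1
      rw [aeval_seq h hh α hα f hf _ hxv] at h2
      obtain ⟨p, hp, hp2⟩ := Finset.exists_ne_zero_of_sum_ne_zero h2
      unfold rootR
      refine Finset.mem_image.2 ⟨p, hp, ?_⟩
      have : α ^ (p.1 * 2 ^ p.2) * x = 1 := by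
        by_contra hcon
        exact hp2 (if_neg hcon)
      exact inv_eq_of_mul_eq_one_right this

theorem rootR_card {K : Type*} [Field K] (h : ℕ) (hh : 2 ≤ h) (α : K)
    (hα : orderOf α = 2 ^ (2 * h) - 1) :
    3 * (rootR h α).card = 2 * h * (3 * (bSet (h + 1)).card - 3) := by
  unfold rootR
  rw [Finset.card_image_of_injOn (root_injOn h hh α hα), Finset.card_product, Finset.card_range,
    Finset.card_erase_of_mem (by simpa using mem_bSet_top h 0 (by omega) (by positivity))]
  rw [show 3 * (bSet (h + 1)).card - 3 = 3 * ((bSet (h + 1)).card - 1) by omega]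
  ring

theorem span_bound (h : ℕ) (hh : 2 ≤ h) (L : ℕ) (hle : 3 * L ≤ 2 * h * (2 ^ (h + 1) - 2)) :
    L < 2 ^ h * 2 ^ h - 1 := by
  have hh2 : 2 * h ≤ 2 ^ h := by
    clear hle
    induction h, hh using Nat.le_induction with
    | base => norm_num
    | succ n hn ih => rw [pow_succ]; omega
  have e1 : 2 ^ (h + 1) = 2 * 2 ^ h := by ring
  rw [e1] at hle
  generalize 2 ^ h = q at *
  have h1 : 2 * h * (2 * q - 2) ≤ q * (2 * q - 2) := Nat.mul_le_mul_right _ hh2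
  obtain ⟨r, rfl⟩ : ∃ r, q = r + 2 := ⟨q - 2, by omega⟩
  have e2 : 2 * (r + 2) - 2 = 2 * r + 2 := by omega
  rw [e2] at h1 hle
  have e3 : (r + 2) * (r + 2) = r * r + 4 * r + 4 := by ring
  have e4 : (r + 2) * (2 * r + 2) = 2 * (r * r) + 6 * r + 4 := by ring
  rw [e3]
  rw [e4] at h1
  omega

/-- Theorem 6: for f₆(x) = x + x^{2^{m/2}} + x^{2^m − 2^{m/2} + 1} over 𝔽_{2^m},
m ≥ 4 even, the linear span is L_s = m(2^{m/2+1} − 2)/3 if m ≡ 0 (mod 4) and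
L_s = m(2^{m/2+1} − 4)/3 if m ≡ 2 (mod 4) (stated via 3·L_s = …); the code C_s
has length 2^m − 1, dimension 2^m − 1 − L_s, and minimum distance d with
2^{(m−2)/2} ≤ d ≤ L_s + 1. -/
theorem stmt15 (m : ℕ) (hm4 : 4 ≤ m) (hme : Even m)
    (α : GaloisField 2 m) (hα : orderOf α = 2 ^ m - 1)
    (f : GaloisField 2 m → GaloisField 2 m)
    (hf : ∀ x, f x = x + x ^ (2 ^ (m / 2)) + x ^ (2 ^ m - 2 ^ (m / 2) + 1)) :
    (m % 4 = 0 →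
      3 * (genPoly m α f).natDegree = m * (2 ^ (m / 2 + 1) - 2)) ∧
    (m % 4 = 2 →
      3 * (genPoly m α f).natDegree = m * (2 ^ (m / 2 + 1) - 4)) ∧
    Module.finrank (ZMod 2) ↥(codeC m α f) =
      2 ^ m - 1 - (genPoly m α f).natDegree ∧
    (∃ d : ℕ, IsLeast (wtSet (codeC m α f)) d ∧
      2 ^ ((m - 2) / 2) ≤ d ∧ d ≤ (genPoly m α f).natDegree + 1) := by
  obtain ⟨h, rfl⟩ := even_iff_two_dvd.1 hme
  have hh : 2 ≤ h := by omega
  have hdiv : 2 * h / 2 = h := by omega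
  rw [hdiv] at hf ⊢
  obtain ⟨hG1, hG2, hG3⟩ := gen_facts h hh α hα f hf
  have hcard := rootR_card h hh α hα
  rw [← hG3] at hcard
  have hp2 : 2 ^ (2 * h) = 2 ^ h * 2 ^ h := by rw [two_mul, pow_add]
  have hp4 : 4 ≤ 2 ^ h := by
    calc 4 = 2 ^ 2 := by norm_num
      _ ≤ 2 ^ h := Nat.pow_le_pow_right (by norm_num) hh
  have hα0 : α ≠ 0 := by
    rintro rfl
    rw [orderOf_zero] at hα
    have : 4 * 4 ≤ 2 ^ h * 2 ^ h := Nat.mul_le_mul hp4 hp4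
    omega
  have c0 : 2 * h % 4 = 0 → 3 * (genPoly (2 * h) α f).natDegree = 2 * h * (2 ^ (h + 1) - 2) := by
    intro h4
    obtain ⟨n, rfl⟩ : ∃ n, h = 2 * n := ⟨h / 2, by omega⟩
    rw [hcard, (bSet_card n).2]
    congr 1
  have c2 : 2 * h % 4 = 2 → 3 * (genPoly (2 * h) α f).natDegree = 2 * h * (2 ^ (h + 1) - 4) := by
    intro h4
    obtain ⟨n, hn⟩ : ∃ n, h + 1 = 2 * n := ⟨(h + 1) / 2, by omega⟩
    have hb := (bSet_card n).1
    rw [← hn] at hb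
    rw [hcard]
    congr 1
    omega
  have hP0 : (X ^ (2 ^ (2 * h) - 1) - 1 : (ZMod 2)[X]) ≠ 0 :=
    X_pow_sub_C_ne_zero (by have := Nat.mul_le_mul hp4 hp4; omega) 1
  have hG0 : genPoly (2 * h) α f ≠ 0 := ne_zero_of_dvd_ne_zero hP0 hG1
  have hlt : (genPoly (2 * h) α f).natDegree < 2 ^ (2 * h) - 1 := by
    have hle : 3 * (genPoly (2 * h) α f).natDegree ≤ 2 * h * (2 ^ (h + 1) - 2) := by
      rcases (by omega : 2 * h % 4 = 0 ∨ 2 * h % 4 = 2) with h4 | h4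
      · rw [c0 h4]
      · rw [c2 h4]
        exact Nat.mul_le_mul_left _ (by omega)
    rw [hp2]
    exact span_bound h hh _ hle
  refine ⟨c0, c2, ?_, ?_⟩
  · exact code_dim _ _ hG0 hlt.le
  · have hmem : genPoly (2 * h) α f ∈ codeC (2 * h) α f := by
      refine Submodule.mem_inf.2 ⟨?_, ?_⟩
      · rw [mem_degreeLT, degree_eq_natDegree hG0]
        exact_mod_cast hlt
      · exact Ideal.mem_span_singleton_self _
    have hw : (genPoly (2 * h) α f).support.card ∈ wtSet (codeC (2 * h) α f) :=
      ⟨_, hmem, hG0, rfl⟩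
    have hne : (wtSet (codeC (2 * h) α f)).Nonempty := ⟨_, hw⟩
    refine ⟨sInf (wtSet (codeC (2 * h) α f)), ⟨Nat.sInf_mem hne, fun _ hx => Nat.sInf_le hx⟩, ?_,
      (Nat.sInf_le hw).trans (card_supp_le_succ_natDegree _)⟩
    obtain ⟨c, hc, hc0, hcw⟩ := Nat.sInf_mem hne
    rw [← hcw]
    obtain ⟨hc1, hc2⟩ := Submodule.mem_inf.1 hc
    rw [mem_degreeLT] at hc1
    have hc3 : genPoly (2 * h) α f ∣ c := Ideal.mem_span_singleton.1 hc2
    have hpos : 0 < 2 ^ (h - 1) := by positivity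
    have hodd : 2 ^ (2 * h) = 2 * 2 ^ (2 * h - 1) := by rw [← pow_succ']; congr 1; omega
    have key := bch (2 ^ (2 * h) - 1) (2 ^ (h - 1) - 1) ((α ^ (2 ^ h + 3))⁻¹) ((α ^ 2)⁻¹)
      (inv_ne_zero (pow_ne_zero _ hα0)) ?_ c hc0 hc1 ?_
    · have : (2 * h - 2) / 2 = h - 1 := by omega
      rw [this]
      omega
    · have e : orderOf (α ^ 2)⁻¹ = orderOf (α ^ 2) := by
        have := orderOf_inv ((Units.mk0 α hα0) ^ 2)
        rw [← orderOf_units, ← orderOf_units] at this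
        simpa using this
      rw [e, Nat.Coprime.orderOf_pow, hα]
      rw [hα, Nat.coprime_two_right, Nat.odd_iff]
      omega
    · intro k hk
      have : (α ^ (2 ^ h + 3))⁻¹ * ((α ^ 2)⁻¹) ^ k ∈ rootR h α := by
        unfold rootR
        refine Finset.mem_image.2 ⟨(2 ^ h + 2 * (k + 1) + 1, 0), ?_, ?_⟩
        · rw [Finset.mem_product, Finset.mem_erase, Finset.mem_range]
          exact ⟨⟨by simp only; omega, mem_bSet_top h (k + 1) (by omega) (by omega)⟩, by simp only; omega⟩
        · simp only [pow_zero, mul_one]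
          rw [inv_pow, ← mul_inv, ← pow_mul, ← pow_add]
          congr 2
          ring
      obtain ⟨d, rfl⟩ := hc3
      rw [map_mul, (hG2 _).1 this, zero_mul]
end

section
/- Let m ≥ 6 be even and let f₇(x) = x + x^{2^{m/2+1} − 1} + x^{2^m − 2^{m/2+1} + 2}; let s_t = Tr(f₇(α^t + 1)). Then the linear span is L_s = m·(2^{(m−2)/2} − 1); consequently the binary cyclic code C_s has length 2^m − 1 and 𝔽₂-dimension 2^m − 1 − m(2^{(m−2)/2} − 1), and the minimum distance satisfies 2^{(m−4)/2} + 1 ≤ d(C_s) ≤ 1 + m(2^{(m−2)/2} − 1). -/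
open Polynomial
open scoped Classical

theorem geom_char2 {K : Type*} [Field K] [CharP K 2] (x : K) (a : ℕ) (ha : a ≠ 0) :
    (x + 1) ^ (2 ^ a - 1) = ∑ i ∈ Finset.range (2 ^ a), x ^ i := by
  have hp : 1 < 2 ^ a := Nat.one_lt_two_pow ha
  by_cases hx : x = 1
  · subst hx
    have h2 : (1 : K) + 1 = 0 := CharTwo.add_self_eq_zero 1
    have h2' : (2 : K) = 0 := CharTwo.two_eq_zero
    rw [h2, zero_pow (by omega)]
    simp [h2', ha]
  · have hx1 : x + 1 ≠ 0 := by
      intro h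
      apply hx
      have := CharTwo.sub_eq_add x (1 : K)
      rw [h] at this
      exact sub_eq_zero.mp this
    apply mul_right_cancel₀ hx1
    rw [← pow_succ, Nat.sub_add_cancel hp.le, add_pow_char_pow, one_pow]
    have := geom_sum_mul x (2 ^ a)
    rw [CharTwo.sub_eq_add, CharTwo.sub_eq_add] at this
    exact this.symm

theorem range_double {K : Type*} [AddCommMonoid K] (F : ℕ → K) (N : ℕ) :
    ∑ i ∈ Finset.range (2 * N), F i =
      ∑ i ∈ Finset.range N, F (2 * i) + ∑ i ∈ Finset.range N, F (2 * i + 1) := by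
  induction N with
  | zero => simp
  | succ n ih =>
    rw [show 2 * (n + 1) = 2 * n + 1 + 1 by ring, Finset.sum_range_succ, Finset.sum_range_succ, ih,
      Finset.sum_range_succ, Finset.sum_range_succ]
    abel

theorem tr_sum (m : ℕ) (hm : m ≠ 0) (x : GaloisField 2 m) :
    algebraMap (ZMod 2) (GaloisField 2 m) (Algebra.trace (ZMod 2) (GaloisField 2 m) x) =
      ∑ i ∈ Finset.range m, x ^ 2 ^ i := by
  rw [FiniteField.algebraMap_trace_eq_sum_pow, GaloisField.finrank 2 hm]
  simp

theorem pow_q (m : ℕ) (hm : m ≠ 0) (x : GaloisField 2 m) : x ^ 2 ^ m = x := by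
  have : Fintype (GaloisField 2 m) := Fintype.ofFinite _
  have h := FiniteField.pow_card x
  rwa [← Nat.card_eq_fintype_card, GaloisField.card 2 m hm] at h

theorem tr_sq (m : ℕ) (hm : m ≠ 0) (x : GaloisField 2 m) :
    Algebra.trace (ZMod 2) (GaloisField 2 m) (x ^ 2) =
      Algebra.trace (ZMod 2) (GaloisField 2 m) x := by
  apply (algebraMap (ZMod 2) (GaloisField 2 m)).injective
  rw [tr_sum m hm, tr_sum m hm]
  have h := Finset.sum_range_succ (fun i => x ^ 2 ^ i) m
  rw [Finset.sum_range_succ', pow_q m hm] at h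
  simp only [pow_zero, pow_one] at h
  rw [← add_right_cancel h]
  refine Finset.sum_congr rfl fun i _ => ?_
  rw [← pow_mul, pow_succ, mul_comm]

theorem tr_pow (m : ℕ) (hm : m ≠ 0) (x : GaloisField 2 m) (a : ℕ) :
    Algebra.trace (ZMod 2) (GaloisField 2 m) (x ^ 2 ^ a) =
      Algebra.trace (ZMod 2) (GaloisField 2 m) x := by
  induction a with
  | zero => simp
  | succ n ih => rw [pow_succ, pow_mul, tr_sq m hm, ih]

/-- The reduced exponents. -/
def gam (k : ℕ) : Fin (2 ^ k - 1) ⊕ Fin (2 ^ k) → ℕ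
  | Sum.inl j => 2 * 2 ^ k + 1 + j
  | Sum.inr i => 6 * 2 ^ k + 2 * i + 1

theorem tr_red (k : ℕ) (x : GaloisField 2 (2 * k + 4)) :
    Algebra.trace (ZMod 2) (GaloisField 2 (2 * k + 4)) ((x + 1) + (x + 1) ^ (2 ^ (k + 3) - 1)
      + (x + 1) ^ (2 ^ (2 * k + 4) - 2 ^ (k + 3) + 2)) =
    Algebra.trace (ZMod 2) (GaloisField 2 (2 * k + 4)) (∑ c, x ^ gam k c) := by
  have hm : 2 * k + 4 ≠ 0 := by omega
  have e3 : Algebra.trace (ZMod 2) (GaloisField 2 (2 * k + 4))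
      ((x + 1) ^ (2 ^ (2 * k + 4) - 2 ^ (k + 3) + 2)) =
      Algebra.trace (ZMod 2) (GaloisField 2 (2 * k + 4))
       ((x + 1) ^ (2 ^ (k + 1) - 1) * (x + 1) ^ 2 ^ (k + 2)) := by
    rw [← tr_pow _ hm _ (k + 1), ← pow_mul, ← pow_add]
    have hp : 1 ≤ 2 ^ k := Nat.one_le_two_pow
    have : (2 ^ (2 * k + 4) - 2 ^ (k + 3) + 2) * 2 ^ (k + 1)
        = 2 ^ (2 * k + 4) * (2 ^ (k + 1) - 1) + 2 ^ (k + 2) := by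
      have h1 : 2 ^ (k + 3) ≤ 2 ^ (2 * k + 4) := Nat.pow_le_pow_right (by norm_num) (by omega)
      have h2 : 1 ≤ 2 ^ (k + 1) := Nat.one_le_two_pow
      zify [h1, h2]
      ring
    rw [this, pow_add, pow_mul, pow_q _ hm, ← pow_add]
  have tr1 : Algebra.trace (ZMod 2) (GaloisField 2 (2 * k + 4)) 1 = 0 := by
    apply (algebraMap (ZMod 2) (GaloisField 2 (2 * k + 4))).injective
    rw [tr_sum _ hm]
    simp only [one_pow, Finset.sum_const, Finset.card_range, nsmul_eq_mul, mul_one, map_zero]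
    push_cast
    have h2 : (2 : GaloisField 2 (2 * k + 4)) = 0 := CharTwo.two_eq_zero
    linear_combination ((k : GaloisField 2 (2 * k + 4)) + 2) * h2
  obtain ⟨n, hn⟩ : ∃ n, 2 ^ k = n + 1 := ⟨2 ^ k - 1, by have : 1 ≤ 2 ^ k := Nat.one_le_two_pow; omega⟩
  rw [map_add, map_add, e3, map_add, tr1, geom_char2 x (k + 3) (by omega), geom_char2 x (k + 1) (by omega),
    add_pow_char_pow, one_pow]
  have hr : ∑ c, x ^ gam k c = ∑ j ∈ Finset.range n, x ^ (2 * (n + 1) + 1 + j) +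
      ∑ i ∈ Finset.range (n + 1), x ^ (6 * (n + 1) + 2 * i + 1) := by
    rw [Fintype.sum_sum_type]
    simp only [gam]
    simp only [← hn]
    rw [Finset.sum_range, Finset.sum_range]
    have : n = 2 ^ k - 1 := by omega
    subst this
    rfl
  have hA : ∑ j ∈ Finset.range (2 ^ (k + 3)), x ^ j =
      ∑ j ∈ Finset.range (2 ^ (k + 1)), x ^ j * (x ^ 2 ^ (k + 2) + 1) +
      ∑ j ∈ Finset.range (2 ^ (k + 1)), x ^ (2 ^ (k + 1) + j) +
      ∑ j ∈ Finset.range (2 ^ (k + 1)), x ^ (3 * 2 ^ (k + 1) + j) := by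
    rw [show 2 ^ (k + 3) = 2 ^ (k + 1) + 2 ^ (k + 1) + 2 ^ (k + 1) + 2 ^ (k + 1) by ring,
      Finset.sum_range_add, Finset.sum_range_add, Finset.sum_range_add]
    rw [← Finset.sum_mul, mul_add, mul_one, Finset.sum_mul]
    rw [show 2 ^ (k + 1) + 2 ^ (k + 1) + 2 ^ (k + 1) = 3 * 2 ^ (k + 1) by ring,
      show 2 ^ (k + 1) + 2 ^ (k + 1) = 2 ^ (k + 2) by ring]
    simp only [← pow_add]
    simp only [add_comm _ (2 ^ (k + 2))]
    ring
  have hB : ∑ j ∈ Finset.range (2 ^ (k + 1)), x ^ (2 ^ (k + 1) + j) =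
      x ^ 2 ^ (k + 1) + ∑ j ∈ Finset.range n, x ^ (2 * (n + 1) + 1 + j) +
      ∑ j ∈ Finset.range (n + 1), x ^ (3 * (n + 1) + j) := by
    rw [pow_succ, hn, mul_two, Finset.sum_range_add, Finset.sum_range_succ']
    congr 1
    · rw [add_comm (x ^ _)]
      congr 1
      exact Finset.sum_congr rfl fun j _ => by congr 1; ring
    · exact Finset.sum_congr rfl fun j _ => by congr 1; ring
  have hC : ∑ j ∈ Finset.range (2 ^ (k + 1)), x ^ (3 * 2 ^ (k + 1) + j) =
      (∑ j ∈ Finset.range (n + 1), x ^ (3 * (n + 1) + j)) ^ 2 +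
      ∑ i ∈ Finset.range (n + 1), x ^ (6 * (n + 1) + 2 * i + 1) := by
    rw [pow_succ, hn, mul_comm (n + 1) 2, range_double, CharTwo.sum_sq]
    congr 1
    · exact Finset.sum_congr rfl fun j _ => by rw [← pow_mul]; congr 1; ring
    · exact Finset.sum_congr rfl fun j _ => by congr 1; ring
  rw [hr, hA, hB, hC, ← Finset.sum_mul]
  simp only [map_add]
  rw [tr_sq _ hm, tr_pow _ hm]
  have h2 : (2 : ZMod 2) = 0 := rfl
  linear_combination (Algebra.trace (ZMod 2) (GaloisField 2 (2 * k + 4)) x +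
    Algebra.trace (ZMod 2) (GaloisField 2 (2 * k + 4)) (∑ j ∈ Finset.range (n + 1), x ^ (3 * (n + 1) + j)) +
    Algebra.trace (ZMod 2) (GaloisField 2 (2 * k + 4))
      ((∑ i ∈ Finset.range (2 ^ (k + 1)), x ^ i) * (x ^ 2 ^ (k + 2) + 1))) * h2

theorem gam_lt (k : ℕ) (c) : gam k c < 8 * 2 ^ k := by
  rcases c with j | i
  · have := j.2; simp only [gam]; omega
  · have := i.2; simp only [gam]; omega

theorem gam_ge (k : ℕ) (c) : 2 * 2 ^ k < gam k c := by
  rcases c with j | i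
  · have := j.2; simp only [gam]; omega
  · have := i.2; simp only [gam]; omega

theorem gam_inj (k : ℕ) : Function.Injective (gam k) := by
  rintro (a | a) (b | b) h <;> simp only [gam] at h
  · congr 1; ext; omega
  · have := a.2; omega
  · have := b.2; omega
  · congr 1; ext; omega

theorem gam_big (k : ℕ) (c) (h : 4 * 2 ^ k ≤ gam k c) : 6 * 2 ^ k ≤ gam k c := by
  rcases c with j | i
  · have := j.2; simp only [gam] at *; omega
  · have := i.2; simp only [gam]; omega

theorem gam_ne_mul (k : ℕ) (c d) (a : ℕ) (ha : a ≠ 0) : gam k c ≠ gam k d * 2 ^ a := by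
  intro h
  obtain ⟨b, rfl⟩ := Nat.exists_eq_succ_of_ne_zero ha
  rw [show gam k d * 2 ^ (b.succ) = 2 * (gam k d * 2 ^ b) by rw [pow_succ]; ring] at h
  have h3 : 1 ≤ 2 ^ b := Nat.one_le_two_pow
  have h4 : gam k d ≤ gam k d * 2 ^ b := Nat.le_mul_of_pos_right _ h3
  have h5 := gam_ge k d
  rcases c with j | i
  · have := j.2
    have e : gam k (Sum.inl j) = 2 * 2 ^ k + 1 + j := rfl
    omega
  · have e : gam k (Sum.inr i) = 6 * 2 ^ k + 2 * i + 1 := rfl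
    omega

theorem gam_modEq (k : ℕ) (c d) (a : ℕ) (ha : a < 2 * k + 4)
    (h : gam k c ≡ gam k d * 2 ^ a [MOD 2 ^ (2 * k + 4) - 1]) : c = d ∧ a = 0 := by
  have hk : 1 ≤ 2 ^ k := Nat.one_le_two_pow
  have hM : 2 ^ (2 * k + 4) = 16 * 2 ^ k * 2 ^ k := by ring
  have hcv : gam k c < 2 ^ (2 * k + 4) - 1 := by
    have := gam_lt k c
    have : 16 * 2 ^ k ≤ 16 * 2 ^ k * 2 ^ k := Nat.le_mul_of_pos_right _ hk
    omega
  have hc0 := gam_ge k c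
  by_cases a0 : a = 0
  · subst a0
    have hdv : gam k d < 2 ^ (2 * k + 4) - 1 := by
      have := gam_lt k d
      have : 16 * 2 ^ k ≤ 16 * 2 ^ k * 2 ^ k := Nat.le_mul_of_pos_right _ hk
      omega
    rw [pow_zero, mul_one] at h
    exact ⟨gam_inj k (Nat.ModEq.eq_of_lt_of_lt h hcv hdv), rfl⟩
  exfalso
  obtain ⟨b, hb⟩ : ∃ b, 2 * k + 4 = a + b := ⟨2 * k + 4 - a, by omega⟩
  obtain ⟨q, r, hr, hqr⟩ : ∃ q r, r < 2 ^ b ∧ gam k d = q * 2 ^ b + r :=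
    ⟨gam k d / 2 ^ b, gam k d % 2 ^ b, Nat.mod_lt _ (by positivity), (Nat.div_add_mod' _ _).symm⟩
  have hpa : 1 ≤ 2 ^ a := Nat.one_le_two_pow
  have hpb : 1 ≤ 2 ^ b := Nat.one_le_two_pow
  have hMab : 2 ^ (2 * k + 4) = 2 ^ a * 2 ^ b := by rw [hb, pow_add]
  have hd := gam_lt k d
  have hd0 := gam_ge k d
  have hq : q < 2 ^ a := by
    have h1 : q * 2 ^ b < 2 ^ a * 2 ^ b := by
      rw [← hMab]
      have : 16 * 2 ^ k ≤ 16 * 2 ^ k * 2 ^ k := Nat.le_mul_of_pos_right _ hk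
      omega
    exact Nat.lt_of_mul_lt_mul_right h1
  have hr1 : (r + 1) * 2 ^ a ≤ 2 ^ a * 2 ^ b := by
    rw [mul_comm]; exact Nat.mul_le_mul_left _ hr
  have hle : q + r * 2 ^ a ≤ 2 ^ (2 * k + 4) - 1 := by
    rw [hMab]
    have : (r + 1) * 2 ^ a = r * 2 ^ a + 2 ^ a := by ring
    omega
  have hmod : gam k c ≡ q + r * 2 ^ a [MOD 2 ^ (2 * k + 4) - 1] := by
    refine h.trans ?_
    have e : gam k d * 2 ^ a = q + r * 2 ^ a + (2 ^ (2 * k + 4) - 1) * q := by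
      have : 1 ≤ 2 ^ (2 * k + 4) := Nat.one_le_two_pow
      rw [hqr]
      zify [this]
      have h' : (2 : ℤ) ^ (2 * k + 4) = 2 ^ a * 2 ^ b := by exact_mod_cast hMab
      rw [h']
      ring
    rw [e]
    simp [Nat.ModEq]
  have heq : gam k c = q + r * 2 ^ a := by
    rcases hle.lt_or_eq with hlt | he
    · exact Nat.ModEq.eq_of_lt_of_lt hmod hcv hlt
    · rw [he] at hmod
      have : gam k c ≡ 0 [MOD 2 ^ (2 * k + 4) - 1] := hmod.trans (by simp [Nat.ModEq])
      have := Nat.ModEq.eq_of_lt_of_lt this hcv (by omega)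
      omega
  rcases Nat.eq_zero_or_pos q with q0 | q0
  · subst q0
    refine gam_ne_mul k c d a a0 ?_
    rw [heq, hqr]; ring
  rcases Nat.eq_zero_or_pos r with r0 | r0
  · subst r0
    refine gam_ne_mul k d c b (by omega) ?_
    rw [heq, hqr]; ring
  have ha2 : a < k + 3 := by
    have h1 : 2 ^ a ≤ r * 2 ^ a := Nat.le_mul_of_pos_left _ r0
    have h2 := gam_lt k c
    have h3 : 2 ^ a < 2 ^ (k + 3) := by rw [pow_add]; omega
    exact (Nat.pow_lt_pow_iff_right (by norm_num)).mp h3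
  have hb2 : b < k + 3 := by
    have h1 : 2 ^ b ≤ q * 2 ^ b := Nat.le_mul_of_pos_left _ q0
    have h3 : 2 ^ b < 2 ^ (k + 3) := by rw [pow_add]; omega
    exact (Nat.pow_lt_pow_iff_right (by norm_num)).mp h3
  have ea : a = k + 2 := by omega
  have eb : b = k + 2 := by omega
  subst ea eb
  have e4 : 2 ^ (k + 2) = 4 * 2 ^ k := by ring
  rw [e4] at heq hqr hr
  clear hcv h hmod hle hr1 hMab hM hq hpa hpb
  have hc := gam_lt k c
  have hbig := gam_big k d
  generalize gam k c = C at *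
  generalize gam k d = D at *
  generalize 2 ^ k = P at *
  have k1 : 4 * P ≤ q * (4 * P) := Nat.le_mul_of_pos_left _ q0
  have h6 := hbig (by omega)
  have q1 : q < 2 := by
    by_contra hq
    have : 2 * (4 * P) ≤ q * (4 * P) := Nat.mul_le_mul_right _ (by omega)
    omega
  have q2 : q = 1 := by omega
  subst q2
  have hr2 : 2 ≤ r := by omega
  have : 2 * (4 * P) ≤ r * (4 * P) := Nat.mul_le_mul_right _ hr2
  omega

theorem quot_facts {F K : Type*} [Field F] [Field K] [Algebra F K] (v : ℕ) (hv : (v : F) ≠ 0)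
    (α : K) (hα : IsPrimitiveRoot α v) (S g : F[X])
    (hg : g = (X ^ v - 1) / EuclideanDomain.gcd (X ^ v - 1) S) :
    g ≠ 0 ∧ g ∣ X ^ v - 1 ∧
    (∀ x : K, aeval x g = 0 ↔ (x ^ v = 1 ∧ aeval x S ≠ 0)) ∧
    Set.ncard {x : K | x ^ v = 1 ∧ aeval x S ≠ 0} = g.natDegree := by
  have hv0 : v ≠ 0 := by rintro rfl; simp at hv
  have hP0 : (X ^ v - 1 : F[X]) ≠ 0 := (X_pow_sub_C_ne_zero (Nat.pos_of_ne_zero hv0) (1 : F))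
  have hsep : (X ^ v - 1 : F[X]).Separable := X_pow_sub_one_separable_iff.mpr hv
  set G := EuclideanDomain.gcd (X ^ v - 1 : F[X]) S with hG
  have hGd : G ∣ X ^ v - 1 := EuclideanDomain.gcd_dvd_left _ _
  have hmul : G * g = X ^ v - 1 := by
    rw [hg]; exact EuclideanDomain.mul_div_cancel' (fun h => hP0 (by rw [h] at hGd; exact zero_dvd_iff.mp hGd)) hGd
  have hg0 : g ≠ 0 := by rintro rfl; rw [mul_zero] at hmul; exact hP0 hmul.symm
  have hgd : g ∣ X ^ v - 1 := ⟨G, by rw [← hmul, mul_comm]⟩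
  have hcop : IsCoprime G g := by
    have := hsep; rw [← hmul] at this; exact this.isCoprime
  have hroot : ∀ x : K, aeval x g = 0 ↔ (x ^ v = 1 ∧ aeval x S ≠ 0) := by
    intro x
    have hPx : aeval x (X ^ v - 1 : F[X]) = x ^ v - 1 := by simp
    constructor
    · intro h
      have h1 : aeval x (X ^ v - 1 : F[X]) = 0 := by rw [← hmul, map_mul, h, mul_zero]
      refine ⟨sub_eq_zero.mp (hPx ▸ h1), fun h2 => ?_⟩
      have h3 : aeval x G = 0 := eval₂_gcd_eq_zero h1 h2
      obtain ⟨a, b, hab⟩ := hcop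
      have := congrArg (aeval x) hab
      simp [h3, h] at this
    · rintro ⟨h1, h2⟩
      have h3 : aeval x G * aeval x g = 0 := by rw [← map_mul, hmul, hPx, h1, sub_self]
      rcases mul_eq_zero.mp h3 with h | h
      · exfalso
        obtain ⟨q, hq⟩ : G ∣ S := EuclideanDomain.gcd_dvd_right _ _
        apply h2
        rw [hq, map_mul, h, zero_mul]
      · exact h
  refine ⟨hg0, hgd, hroot, ?_⟩
  have hspl : Splits (g.map (algebraMap F K)) := by
    refine (X_pow_sub_one_splits hα).of_dvd ?_ ?_
    · exact (X_pow_sub_C_ne_zero (Nat.pos_of_ne_zero hv0) (1 : K))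
    · have := Polynomial.map_dvd (algebraMap F K) hgd
      simpa using this
  rw [← card_rootSet_eq_natDegree (K := K) (hsep.of_dvd hgd) hspl, ← Nat.card_eq_fintype_card]
  rw [Nat.card_coe_set_eq]
  congr 1
  ext x
  rw [Polynomial.mem_rootSet]
  simp [hroot, hg0]

theorem code_finrank {F : Type*} [Field F] (v : ℕ) (g : F[X]) (hg : g ≠ 0) (hd : g.natDegree ≤ v) :
    Module.finrank F ↥(Polynomial.degreeLT F v ⊓ (Ideal.span {g}).restrictScalars F) =
      v - g.natDegree := by
  have hinj : Function.Injective (LinearMap.mulLeft F g) := fun a b h => mul_left_cancel₀ hg h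
  have e : Polynomial.degreeLT F v ⊓ (Ideal.span {g}).restrictScalars F =
      (Polynomial.degreeLT F (v - g.natDegree)).map (LinearMap.mulLeft F g) := by
    ext c
    simp only [Submodule.mem_inf, Submodule.restrictScalars_mem, Ideal.mem_span_singleton,
      Submodule.mem_map, mem_degreeLT, LinearMap.mulLeft_apply]
    have key : ∀ q : F[X], (g * q).degree < v ↔ q.degree < ((v - g.natDegree : ℕ) : WithBot ℕ) := by
      intro q
      by_cases hq : q = 0
      · simp [hq]
      · rw [← natDegree_lt_iff_degree_lt hq, ← natDegree_lt_iff_degree_lt (mul_ne_zero hg hq),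
          natDegree_mul hg hq]
        omega
    constructor
    · rintro ⟨h1, q, rfl⟩
      exact ⟨q, (key q).mp h1, rfl⟩
    · rintro ⟨q, h1, rfl⟩
      exact ⟨(key q).mpr h1, q, rfl⟩
  rw [e, ← (Submodule.equivMapOfInjective _ hinj _).finrank_eq, (degreeLTEquiv F _).finrank_eq]
  simp

theorem bch_s17 {F K : Type*} [Field F] [Field K] [Algebra F K] (v N : ℕ) (β γ : K) (hβ : β ≠ 0)
    (hγ : ∀ s t, s < v → t < v → γ ^ s = γ ^ t → s = t) (c : F[X]) (hc : c ≠ 0)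
    (hd : c.degree < v)
    (hz : ∀ i < N, aeval (β * γ ^ i) c = 0) : N + 1 ≤ c.support.card := by
  by_contra hlt
  obtain ⟨t0, ht0⟩ := Polynomial.support_nonempty.mpr hc
  have hlt_v : ∀ t ∈ c.support, t < v := fun t ht => by
    have := (le_degree_of_mem_supp t ht).trans_lt hd
    exact_mod_cast this
  have hz' : ∀ i < N, ∑ t ∈ c.support, algebraMap F K (c.coeff t) * β ^ t * (γ ^ t) ^ i = 0 := by
    intro i hi
    rw [← hz i hi, aeval_def, eval₂_eq_sum, Polynomial.sum_def]
    refine Finset.sum_congr rfl fun t _ => ?_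
    rw [mul_pow, ← pow_mul, ← pow_mul, mul_comm t i, mul_assoc]
  have hQ : ∀ Q : K[X], Q.natDegree < N →
      ∑ t ∈ c.support, algebraMap F K (c.coeff t) * β ^ t * Q.eval (γ ^ t) = 0 := by
    intro Q hQ
    simp_rw [eval_eq_sum_range, Finset.mul_sum]
    rw [Finset.sum_comm]
    refine Finset.sum_eq_zero fun i hi => ?_
    have := hz' i (by rw [Finset.mem_range] at hi; omega)
    have h2 := congrArg (fun z => Q.coeff i * z) this
    simp only [mul_zero, Finset.mul_sum] at h2
    rw [← h2]
    exact Finset.sum_congr rfl fun t _ => by ring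
  have h1 := hQ (∏ t ∈ c.support.erase t0, (X - C (γ ^ t))) (by
    rw [natDegree_prod_of_monic _ _ (fun t _ => monic_X_sub_C _)]
    simp only [natDegree_X_sub_C, Finset.sum_const, smul_eq_mul, mul_one]
    rw [Finset.card_erase_of_mem ht0]
    have := Finset.card_pos.mpr ⟨t0, ht0⟩
    omega)
  rw [Finset.sum_eq_single_of_mem t0 ht0] at h1
  · rw [eval_prod] at h1
    have hcc : algebraMap F K (c.coeff t0) ≠ 0 := by
      simpa using Polynomial.mem_support_iff.mp ht0
    rcases mul_eq_zero.mp h1 with h | h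
    · exact mul_ne_zero hcc (pow_ne_zero _ hβ) h
    · obtain ⟨t, ht, h⟩ := Finset.prod_eq_zero_iff.mp h
      rw [Finset.mem_erase] at ht
      simp only [eval_sub, eval_X, eval_C] at h
      exact ht.1 (hγ t0 t (hlt_v _ ht0) (hlt_v _ ht.2) (sub_eq_zero.mp h)).symm
  · intro t ht hne
    rw [eval_prod, Finset.prod_eq_zero (Finset.mem_erase.mpr ⟨hne, ht⟩), mul_zero]
    simp

theorem geom_ind {K : Type*} [Field K] (v : ℕ) (y : K) (hy : y ^ v = 1) :
    ∑ t ∈ Finset.range v, y ^ t = if y = 1 then (v : K) else 0 := by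
  split_ifs with h
  · simp [h]
  · have := mul_geom_sum y v
    rw [hy, sub_self] at this
    exact (mul_eq_zero.mp this).resolve_left (sub_ne_zero.mpr h)

/-- The exponent attached to an index and a Frobenius power. -/
def expo (k : ℕ) (p : (Fin (2 ^ k - 1) ⊕ Fin (2 ^ k)) × Fin (2 * k + 4)) : ℕ :=
  gam k p.1 * 2 ^ (p.2 : ℕ)

theorem expo_inj_aux (k : ℕ) (c d) (i j : ℕ) (hij : i ≤ j) (hj : j < 2 * k + 4)
    (h : gam k c * 2 ^ i ≡ gam k d * 2 ^ j [MOD 2 ^ (2 * k + 4) - 1]) : c = d ∧ i = j := by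
  obtain ⟨a, rfl⟩ := Nat.exists_eq_add_of_le hij
  have hcop : Nat.gcd (2 ^ (2 * k + 4) - 1) (2 ^ i) = 1 := by
    apply Nat.Coprime.pow_right
    rw [Nat.coprime_two_right]
    refine Nat.Even.sub_odd Nat.one_le_two_pow ?_ odd_one
    exact (even_two.pow_of_ne_zero (by omega))
  rw [show gam k d * 2 ^ (i + a) = gam k d * 2 ^ a * 2 ^ i by rw [pow_add]; ring] at h
  have := gam_modEq k c d a (by omega) (Nat.ModEq.cancel_right_of_coprime hcop h)
  exact ⟨this.1, by omega⟩

theorem expo_inj (k : ℕ) (p q) (h : expo k p ≡ expo k q [MOD 2 ^ (2 * k + 4) - 1]) : p = q := by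
  obtain ⟨c, i⟩ := p
  obtain ⟨d, j⟩ := q
  simp only [expo] at h
  rcases le_total (i : ℕ) j with hij | hij
  · obtain ⟨h1, h2⟩ := expo_inj_aux k c d i j hij j.2 h
    rw [h1, Fin.ext h2]
  · obtain ⟨h1, h2⟩ := expo_inj_aux k d c j i hij i.2 h.symm
    rw [h1, Fin.ext h2]

theorem S_eval (k : ℕ) (α : GaloisField 2 (2 * k + 4)) (hα : orderOf α = 2 ^ (2 * k + 4) - 1)
    (f : GaloisField 2 (2 * k + 4) → GaloisField 2 (2 * k + 4))
    (hf : ∀ x, f x = x + x ^ (2 ^ (k + 3) - 1) + x ^ (2 ^ (2 * k + 4) - 2 ^ (k + 3) + 2))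
    (y : GaloisField 2 (2 * k + 4)) (hy : y ^ (2 ^ (2 * k + 4) - 1) = 1) :
    aeval y (traceSeqPoly (2 * k + 4) α f) = ∑ p, if α ^ expo k p * y = 1 then 1 else 0 := by
  have hαv : α ^ (2 ^ (2 * k + 4) - 1) = 1 := hα ▸ pow_orderOf_eq_one α
  have hv1 : ((2 ^ (2 * k + 4) - 1 : ℕ) : GaloisField 2 (2 * k + 4)) = 1 := by
    rw [Nat.cast_sub Nat.one_le_two_pow]
    push_cast
    rw [show (2 : GaloisField 2 (2 * k + 4)) = 0 from CharTwo.two_eq_zero, zero_pow (by omega),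
      zero_sub, CharTwo.neg_eq]
  have hs : ∀ p, (if α ^ expo k p * y = 1 then (1 : GaloisField 2 (2 * k + 4)) else 0) =
      ∑ t ∈ Finset.range (2 ^ (2 * k + 4) - 1), (α ^ expo k p * y) ^ t := by
    intro p
    rw [geom_ind, hv1]
    rw [mul_pow, hy, mul_one, pow_right_comm, hαv, one_pow]
  simp_rw [hs]
  rw [Finset.sum_comm]
  simp only [traceSeqPoly, map_sum, map_mul, aeval_C, aeval_X, map_pow]
  refine Finset.sum_congr rfl fun t _ => ?_
  rw [hf, tr_red, tr_sum _ (by omega), Finset.sum_mul, Fintype.sum_prod_type, Finset.sum_comm,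
    Finset.sum_range]
  refine Finset.sum_congr rfl fun i _ => ?_
  rw [sum_pow_char_pow, Finset.sum_mul]
  refine Finset.sum_congr rfl fun c _ => ?_
  rw [mul_pow]
  congr 1
  simp only [← pow_mul, expo]
  congr 1
  ring


theorem field_pow_modEq {K : Type*} [Field K] (x : K) (hx : x ≠ 0) (a b : ℕ)
    (h : x ^ a = x ^ b) : a ≡ b [MOD orderOf x] := by
  have h' : (Units.mk0 x hx) ^ a = (Units.mk0 x hx) ^ b := by
    ext
    simpa using h
  rw [pow_eq_pow_iff_modEq, ← orderOf_units] at h'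
  exact h'

theorem main_k (k : ℕ) (hk : 1 ≤ k)
    (α : GaloisField 2 (2 * k + 4)) (hα : orderOf α = 2 ^ (2 * k + 4) - 1)
    (f : GaloisField 2 (2 * k + 4) → GaloisField 2 (2 * k + 4))
    (hf : ∀ x, f x = x + x ^ (2 ^ (k + 3) - 1) + x ^ (2 ^ (2 * k + 4) - 2 ^ (k + 3) + 2)) :
    (genPoly (2 * k + 4) α f).natDegree = (2 * k + 4) * (2 ^ (k + 1) - 1) ∧
    Module.finrank (ZMod 2) ↥(codeC (2 * k + 4) α f) =
      2 ^ (2 * k + 4) - 1 - (2 * k + 4) * (2 ^ (k + 1) - 1) ∧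
    (∃ d : ℕ, IsLeast (wtSet (codeC (2 * k + 4) α f)) d ∧
      2 ^ k + 1 ≤ d ∧ d ≤ 1 + (2 * k + 4) * (2 ^ (k + 1) - 1)) := by
  have hp1 : 1 < 2 ^ (2 * k + 4) := Nat.one_lt_two_pow (by omega)
  have hodd : Odd (2 ^ (2 * k + 4) - 1) :=
    Nat.Even.sub_odd Nat.one_le_two_pow (even_two.pow_of_ne_zero (by omega)) odd_one
  have hαv : α ^ (2 ^ (2 * k + 4) - 1) = 1 := hα ▸ pow_orderOf_eq_one α
  have hα0 : α ≠ 0 := by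
    rintro rfl
    rw [zero_pow (by omega)] at hαv
    exact zero_ne_one hαv
  have hprim : IsPrimitiveRoot α (2 ^ (2 * k + 4) - 1) := hα ▸ IsPrimitiveRoot.orderOf α
  have hvF : ((2 ^ (2 * k + 4) - 1 : ℕ) : ZMod 2) ≠ 0 := by
    rw [ZMod.natCast_ne_zero_iff_odd]; exact hodd
  obtain ⟨hg0, hgd, hroot, hcard⟩ := quot_facts (2 ^ (2 * k + 4) - 1) hvF α hprim
    (traceSeqPoly (2 * k + 4) α f) (genPoly (2 * k + 4) α f) (by unfold genPoly; congr!)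
  have hinj : Function.Injective (fun p => (α ^ expo k p)⁻¹) := by
    intro p q h
    have h' : α ^ expo k p = α ^ expo k q := inv_injective h
    replace h' := field_pow_modEq α hα0 _ _ h'
    rw [hα] at h'
    exact expo_inj k p q h'
  have hset : {x : GaloisField 2 (2 * k + 4) | x ^ (2 ^ (2 * k + 4) - 1) = 1 ∧
      aeval x (traceSeqPoly (2 * k + 4) α f) ≠ 0} = Set.range (fun p => (α ^ expo k p)⁻¹) := by
    ext x
    simp only [Set.mem_ofPred_eq, Set.mem_range]
    constructor
    · rintro ⟨h1, h2⟩
      rw [S_eval k α hα f hf x h1] at h2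
      obtain ⟨p, _, hp⟩ := Finset.exists_ne_zero_of_sum_ne_zero h2
      refine ⟨p, ?_⟩
      by_contra hne
      apply hp
      rw [if_neg]
      intro h
      exact hne (inv_eq_of_mul_eq_one_right h)
    · rintro ⟨p, rfl⟩
      have h1 : ((α ^ expo k p)⁻¹) ^ (2 ^ (2 * k + 4) - 1) = 1 := by
        rw [inv_pow, pow_right_comm, hαv, one_pow, inv_one]
      refine ⟨h1, ?_⟩
      rw [S_eval k α hα f hf _ h1, Finset.sum_eq_single p]
      · rw [if_pos (mul_inv_cancel₀ (pow_ne_zero _ hα0))]; exact one_ne_zero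
      · intro q _ hq
        rw [if_neg]
        intro h
        apply hq
        apply hinj
        exact inv_eq_of_mul_eq_one_right h
      · intro h; exact absurd (Finset.mem_univ _) h
  have hdeg : (genPoly (2 * k + 4) α f).natDegree = (2 * k + 4) * (2 ^ (k + 1) - 1) := by
    rw [← hcard, hset, ← Set.image_univ, Set.ncard_image_of_injective _ hinj, Set.ncard_univ,
      Nat.card_eq_fintype_card, Fintype.card_prod, Fintype.card_sum, Fintype.card_fin,
      Fintype.card_fin, Fintype.card_fin, mul_comm]
    congr 1
    have : 1 ≤ 2 ^ k := Nat.one_le_two_pow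
    rw [pow_succ]; omega
  have hltv : (2 * k + 4) * (2 ^ (k + 1) - 1) < 2 ^ (2 * k + 4) - 1 := by
    have h1 : 2 * k + 4 ≤ 2 ^ (k + 2) := by
      have := Nat.lt_two_pow_self (n := k + 1)
      rw [show 2 ^ (k + 2) = 2 * 2 ^ (k + 1) by ring]
      omega
    have h2 : (2 * k + 4) * (2 ^ (k + 1) - 1) ≤ 2 ^ (k + 2) * (2 ^ (k + 1) - 1) :=
      Nat.mul_le_mul_right _ h1
    have h3 : 2 ^ (k + 2) * (2 ^ (k + 1) - 1) ≤ 2 ^ (k + 2) * 2 ^ (k + 1) :=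
      Nat.mul_le_mul_left _ (Nat.sub_le _ _)
    have h4 : 2 ^ (2 * k + 4) = 2 * (2 ^ (k + 2) * 2 ^ (k + 1)) := by ring
    have h5 : 1 < 2 ^ (k + 2) * 2 ^ (k + 1) := by
      rw [← pow_add]; exact Nat.one_lt_two_pow (by omega)
    omega
  refine ⟨hdeg, ?_, ?_⟩
  · rw [← hdeg]
    exact code_finrank _ _ hg0 (by omega)
  have hgm : genPoly (2 * k + 4) α f ∈ codeC (2 * k + 4) α f := by
    refine Submodule.mem_inf.mpr ⟨?_, ?_⟩
    · rw [mem_degreeLT, ← natDegree_lt_iff_degree_lt hg0, hdeg]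
      exact hltv
    · exact Ideal.mem_span_singleton_self _
  have hne : (wtSet (codeC (2 * k + 4) α f)).Nonempty := ⟨_, _, hgm, hg0, rfl⟩
  refine ⟨sInf (wtSet (codeC (2 * k + 4) α f)), ⟨Nat.sInf_mem hne, fun w hw => Nat.sInf_le hw⟩, ?_, ?_⟩
  · obtain ⟨c, hc, hc0, hw⟩ := Nat.sInf_mem hne
    rw [← hw]
    obtain ⟨hc1, hc2⟩ := Submodule.mem_inf.mp hc
    rw [mem_degreeLT] at hc1
    have hc3 : genPoly (2 * k + 4) α f ∣ c := Ideal.mem_span_singleton.mp hc2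
    refine bch_s17 (K := GaloisField 2 (2 * k + 4)) (2 ^ (2 * k + 4) - 1) (2 ^ k)
      ((α ^ (6 * 2 ^ k + 1))⁻¹) ((α ^ 2)⁻¹) (inv_ne_zero (pow_ne_zero _ hα0)) ?_ c hc0 hc1 ?_
    · intro s t hs ht h
      rw [inv_pow, inv_pow, inv_inj, ← pow_mul, ← pow_mul] at h
      replace h := field_pow_modEq α hα0 _ _ h
      rw [hα] at h
      have hcop : Nat.gcd (2 ^ (2 * k + 4) - 1) 2 = 1 := Nat.coprime_two_right.mpr hodd
      exact Nat.ModEq.eq_of_lt_of_lt (Nat.ModEq.cancel_left_of_coprime hcop h) hs ht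
    · intro i hi
      have hz : aeval ((α ^ (6 * 2 ^ k + 1))⁻¹ * ((α ^ 2)⁻¹) ^ i) (genPoly (2 * k + 4) α f) = 0 := by
        rw [hroot]
        have : (α ^ (6 * 2 ^ k + 1))⁻¹ * ((α ^ 2)⁻¹) ^ i ∈ Set.range (fun p => (α ^ expo k p)⁻¹) := by
          refine ⟨(Sum.inr ⟨i, hi⟩, ⟨0, by omega⟩), ?_⟩
          simp only [expo, gam]
          rw [inv_pow, ← mul_inv, ← pow_mul, ← pow_add, pow_zero, mul_one]
          congr 2
          ring
        rw [← hset] at this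
        exact this
      obtain ⟨q, rfl⟩ := hc3
      rw [map_mul, hz, zero_mul]
  · have hmem : (genPoly (2 * k + 4) α f).support.card ∈ wtSet (codeC (2 * k + 4) α f) :=
      ⟨_, hgm, hg0, rfl⟩
    refine (Nat.sInf_le hmem).trans ?_
    refine (Polynomial.card_supp_le_succ_natDegree _).trans ?_
    rw [hdeg]; omega

/-- Theorem 7: for f₇(x) = x + x^{2^{m/2+1} − 1} + x^{2^m − 2^{m/2+1} + 2} over
𝔽_{2^m}, m ≥ 6 even, the linear span is L_s = m(2^{(m−2)/2} − 1); the code C_s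
has length 2^m − 1, dimension 2^m − 1 − m(2^{(m−2)/2} − 1), and minimum
distance d with 2^{(m−4)/2} + 1 ≤ d ≤ 1 + m(2^{(m−2)/2} − 1). -/
theorem stmt17 (m : ℕ) (hm6 : 6 ≤ m) (hme : Even m)
    (α : GaloisField 2 m) (hα : orderOf α = 2 ^ m - 1)
    (f : GaloisField 2 m → GaloisField 2 m)
    (hf : ∀ x, f x = x + x ^ (2 ^ (m / 2 + 1) - 1) +
        x ^ (2 ^ m - 2 ^ (m / 2 + 1) + 2)) :
    (genPoly m α f).natDegree = m * (2 ^ ((m - 2) / 2) - 1) ∧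
    Module.finrank (ZMod 2) ↥(codeC m α f) =
      2 ^ m - 1 - m * (2 ^ ((m - 2) / 2) - 1) ∧
    (∃ d : ℕ, IsLeast (wtSet (codeC m α f)) d ∧
      2 ^ ((m - 4) / 2) + 1 ≤ d ∧ d ≤ 1 + m * (2 ^ ((m - 2) / 2) - 1)) := by
  obtain ⟨k, rfl⟩ : ∃ k, m = 2 * k + 4 := by
    obtain ⟨r, hr⟩ := hme
    exact ⟨r - 2, by omega⟩
  have e1 : (2 * k + 4) / 2 + 1 = k + 3 := by omega
  have e2 : (2 * k + 4 - 2) / 2 = k + 1 := by omega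
  have e3 : (2 * k + 4 - 4) / 2 = k := by omega
  rw [e1] at hf
  rw [e2, e3]
  exact main_k k (by omega) α hα f hf
end
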